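/- Let (X_1,…,X_r) have the Gumbel-case GEV_r density (ξ = 0) with parameters μ ∈ ℝ, σ > 0, and r ≥ 2, and set Y = −log σ − e^{−Z_r} + e^{−Z_{r−1}} − Z_r with Z_j = (X_j − μ)/σ. Then E[Y] = −log σ − 1 + ψ(r). -/

import Mathlib

open MeasureTheory ProbabilityTheory Real Filter Topology

/-- The joint density of the `r` largest order statistics limit in the Gumbel
case (ξ = 0) with location `μ` and scale `σ`.  The coordinates are in
decreasing order: `x 0` is `x_1` (the largest) and `x ⟨r-1,_⟩` is `x_r`. -/
noncomputable def gevr0Density (μ σ : ℝ) (r : ℕ) (x : Fin r → ℝ) : ℝ :=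
  if h : 0 < r ∧ StrictAnti x then
    (σ ^ r)⁻¹ * Real.exp
      (-Real.exp (-((x ⟨r - 1, Nat.sub_lt h.1 Nat.one_pos⟩ - μ) / σ))
        - ∑ j, (x j - μ) / σ)
  else 0

/-- The Gumbel-case GEV_r probability measure on `ℝ^r`. -/
noncomputable def gevr0Measure (μ σ : ℝ) (r : ℕ) : Measure (Fin r → ℝ) :=
  MeasureTheory.volume.withDensity fun x => ENNReal.ofReal (gevr0Density μ σ r x)

/-- The digamma function `ψ(x) = Γ'(x)/Γ(x)`. -/
noncomputable def digamma (x : ℝ) : ℝ := deriv Real.Gamma x / Real.Gamma x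


noncomputable def gT (μ σ x : ℝ) : ℝ := Real.exp (-((x - μ) / σ))

noncomputable def gW (μ σ x : ℝ) : ENNReal := ENNReal.ofReal (gT μ σ x / σ)

noncomputable def gP (k : ℕ) (t : ℝ) : ENNReal := ENNReal.ofReal (t ^ k / (k.factorial : ℝ))

lemma gT_pos (μ σ x : ℝ) : 0 < gT μ σ x := Real.exp_pos _

lemma gT_cont (μ σ : ℝ) : Continuous (gT μ σ) := by
  unfold gT; fun_prop

@[fun_prop]
lemma gT_meas (μ σ : ℝ) : Measurable (gT μ σ) := (gT_cont μ σ).measurable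

@[fun_prop]
lemma gW_meas (μ σ : ℝ) : Measurable (gW μ σ) := by
  unfold gW; fun_prop

@[fun_prop]
lemma gP_meas (k : ℕ) : Measurable (gP k) := by
  unfold gP; fun_prop

lemma gT_lt (μ σ : ℝ) (hσ : 0 < σ) (a b : ℝ) : gT μ σ a < gT μ σ b ↔ b < a := by
  unfold gT
  rw [Real.exp_lt_exp, neg_lt_neg_iff, div_lt_div_iff_of_pos_right hσ]
  constructor <;> intro h <;> linarith

lemma gT_range (μ σ : ℝ) (hσ : 0 < σ) : gT μ σ '' Set.univ = Set.Ioi 0 := by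
  ext t
  constructor
  · rintro ⟨x, -, rfl⟩
    exact gT_pos _ _ _
  · intro ht
    refine ⟨μ - σ * Real.log t, trivial, ?_⟩
    unfold gT
    have : -((μ - σ * Real.log t - μ) / σ) = Real.log t := by field_simp; ring
    rw [this, Real.exp_log ht]

lemma gT_cov (μ σ : ℝ) (hσ : 0 < σ) (g : ℝ → ENNReal) :
    ∫⁻ x, gW μ σ x * g (gT μ σ x) = ∫⁻ t in Set.Ioi 0, g t := by
  have hd : ∀ x ∈ Set.univ, HasDerivWithinAt (gT μ σ) (gT μ σ x * (-(1 / σ))) Set.univ x := by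
    intro x _
    refine HasDerivAt.hasDerivWithinAt ?_
    unfold gT
    exact ((((hasDerivAt_id x).sub_const μ).div_const σ).neg).exp
  have hinj : Set.InjOn (gT μ σ) Set.univ := by
    intro a _ b _ h
    rcases lt_trichotomy a b with h' | h' | h'
    · exact absurd h ((gT_lt μ σ hσ b a).2 h').ne'
    · exact h'
    · exact absurd h ((gT_lt μ σ hσ a b).2 h').ne
  have := lintegral_image_eq_lintegral_abs_deriv_mul MeasurableSet.univ hd hinj g
  rw [gT_range μ σ hσ, Measure.restrict_univ] at this
  rw [this]
  refine lintegral_congr fun x => ?_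
  unfold gW
  congr 2
  rw [abs_mul, abs_of_pos (gT_pos _ _ _), abs_neg, abs_of_pos (by positivity)]
  ring

/-- integrate out an upper coordinate -/
lemma gP_step (k : ℕ) (s : ℝ) (hs : 0 < s) :
    ∫⁻ t in Set.Ioi 0, (Set.Iio s).indicator (gP k) t = gP (k + 1) s := by
  rw [setLIntegral_indicator measurableSet_Iio, Set.inter_comm, Set.Ioi_inter_Iio]
  unfold gP
  rw [← ofReal_integral_eq_lintegral_ofReal]
  · congr 1
    rw [← integral_Ioc_eq_integral_Ioo, ← intervalIntegral.integral_of_le hs.le,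
      intervalIntegral.integral_div, integral_pow, Nat.factorial_succ]
    push_cast
    have := Nat.factorial_ne_zero k
    field_simp
    simp
  · refine (Continuous.integrableOn_Icc (a := 0) (b := s) (by fun_prop)).mono_set Set.Ioo_subset_Icc_self
  · filter_upwards [ae_restrict_mem measurableSet_Ioo] with t ht
    have := ht.1.le
    positivity

/-- integrate out the bottom coordinate -/
lemma gE_step (s : ℝ) (hs : 0 < s) :
    ∫⁻ t in Set.Ioi 0, (Set.Ioi s).indicator (fun t => ENNReal.ofReal (Real.exp (-t))) t
      = ENNReal.ofReal (Real.exp (-s)) := by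
  rw [setLIntegral_indicator measurableSet_Ioi, Set.Ioi_inter_Ioi, sup_eq_left.2 hs.le]
  rw [← ofReal_integral_eq_lintegral_ofReal, integral_exp_neg_Ioi]
  · exact integrableOn_exp_neg_Ioi s
  · exact ae_of_all _ fun t => (Real.exp_pos _).le

lemma lintegral_cons (n : ℕ) (g : (Fin (n + 1) → ℝ) → ENNReal) (hg : Measurable g) :
    ∫⁻ x, g x = ∫⁻ y : Fin n → ℝ, ∫⁻ a : ℝ, g (Matrix.vecCons a y) := by
  have h := volume_preserving_piFinSuccAbove (fun _ : Fin (n + 1) => ℝ) 0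
  rw [← h.symm.lintegral_comp hg, Measure.volume_eq_prod, lintegral_prod_symm]
  · refine lintegral_congr fun y => lintegral_congr fun a => ?_
    congr 1
    simp [MeasurableEquiv.piFinSuccAbove, Fin.insertNthEquiv]
    rfl
  · exact (hg.comp (MeasurableEquiv.measurable _)).aemeasurable

lemma measSet_anti (n : ℕ) : MeasurableSet {x : Fin n → ℝ | StrictAnti x} := by
  have : {x : Fin n → ℝ | StrictAnti x} = ⋂ i, ⋂ j, {x | i < j → x j < x i} := by
    ext x; simp [StrictAnti]
  rw [this]
  refine MeasurableSet.iInter fun i => MeasurableSet.iInter fun j => ?_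
  by_cases h : i < j
  · simp only [h, true_imp_iff]
    exact measurableSet_lt (measurable_pi_apply j) (measurable_pi_apply i)
  · simp [h]

noncomputable def gS (μ σ : ℝ) (F : ℝ → ℝ → ENNReal) (n k : ℕ) (x : Fin (n + 2) → ℝ) : ENNReal :=
  {x : Fin (n + 2) → ℝ | StrictAnti x}.indicator
    (fun x => gP k (gT μ σ (x 0)) * (∏ j, gW μ σ (x j)) *
      F (x (Fin.last n).castSucc) (x (Fin.last (n + 1)))) x

lemma gS_meas (μ σ : ℝ) (F : ℝ → ℝ → ENNReal) (hF : Measurable (Function.uncurry F)) (n k : ℕ) :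
    Measurable (gS μ σ F n k) := by
  unfold gS
  refine Measurable.indicator ?_ (measSet_anti _)
  refine Measurable.mul (by fun_prop) ?_
  exact hF.comp (Measurable.prodMk (measurable_pi_apply _) (measurable_pi_apply _))

lemma gS_step (μ σ : ℝ) (hσ : 0 < σ) (F : ℝ → ℝ → ENNReal) (hF : Measurable (Function.uncurry F))
    (n k : ℕ) : ∫⁻ x, gS μ σ F (n + 1) k x = ∫⁻ x, gS μ σ F n (k + 1) x := by
  rw [lintegral_cons _ _ (gS_meas μ σ F hF _ _)]
  refine lintegral_congr fun y => ?_
  by_cases hy : StrictAnti y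
  · have h1 : ∀ a, gS μ σ F (n + 1) k (Matrix.vecCons a y) =
        (gW μ σ a * (Set.Iio (gT μ σ (y 0))).indicator (gP k) (gT μ σ a)) *
          ((∏ j, gW μ σ (y j)) * F (y (Fin.last n).castSucc) (y (Fin.last (n + 1)))) := by
      intro a
      unfold gS
      by_cases ha : y 0 < a
      · rw [Set.indicator_of_mem, Set.indicator_of_mem]
        · rw [Fin.prod_univ_succ]
          simp only [Matrix.cons_val_zero, Matrix.cons_val_succ]
          have e1 : (Fin.last (n + 1)).castSucc = ((Fin.last n).castSucc).succ := by
            rw [← Fin.succ_last, Fin.succ_castSucc]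
          have e2 : Fin.last (n + 1 + 1) = (Fin.last (n + 1)).succ := (Fin.succ_last _).symm
          rw [e1, e2]
          simp only [Matrix.cons_val_succ]
          ring
        · exact (gT_lt μ σ hσ _ _).2 ha
        · exact strictAnti_vecCons.2 ⟨ha, hy⟩
      · rw [Set.indicator_of_notMem, Set.indicator_of_notMem]
        · simp
        · exact fun h => ha ((gT_lt μ σ hσ _ _).1 h)
        · exact fun h => ha (strictAnti_vecCons.1 h).1
    simp_rw [h1]
    rw [lintegral_mul_const _ (by
      exact (gW_meas μ σ).mul
        (((gP_meas k).indicator measurableSet_Iio).comp (gT_meas μ σ)))]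
    rw [gT_cov μ σ hσ, gP_step _ _ (gT_pos _ _ _)]
    unfold gS
    rw [Set.indicator_of_mem (by exact hy), mul_assoc]
  · have h1 : ∀ a, gS μ σ F (n + 1) k (Matrix.vecCons a y) = 0 := by
      intro a
      exact Set.indicator_of_notMem (fun h => hy (strictAnti_vecCons.1 h).2) _
    simp_rw [h1]
    unfold gS
    rw [Set.indicator_of_notMem (by exact hy)]
    simp

lemma gS_all (μ σ : ℝ) (hσ : 0 < σ) (F : ℝ → ℝ → ENNReal) (hF : Measurable (Function.uncurry F))
    (n k : ℕ) : ∫⁻ x, gS μ σ F n k x = ∫⁻ x, gS μ σ F 0 (n + k) x := by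
  induction n generalizing k with
  | zero => simp
  | succ n ih => rw [gS_step μ σ hσ F hF, ih]; congr 2; ext x; rw [show n + (k+1) = n + 1 + k by ring]

lemma lintegral_fin_one (g : (Fin 1 → ℝ) → ENNReal) :
    ∫⁻ x, g x = ∫⁻ b : ℝ, g (fun _ => b) := by
  have h := volume_preserving_funUnique (Fin 1) ℝ
  have h2 := h.symm.lintegral_comp_emb (MeasurableEquiv.measurableEmbedding _) g
  have h3 : ∫⁻ x, g x = ∫⁻ a : ℝ, g ((MeasurableEquiv.funUnique (Fin 1) ℝ).symm a) := by
    convert h2.symm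
  exact h3

lemma gS_two (μ σ : ℝ) (hσ : 0 < σ) (G : ℝ → ℝ → ENNReal) (hG : Measurable (Function.uncurry G))
    (k : ℕ) : ∫⁻ x, gS μ σ (fun a b => G (gT μ σ a) (gT μ σ b)) 0 k x =
      ∫⁻ t in Set.Ioi (0 : ℝ), ∫⁻ s in Set.Ioi (0 : ℝ), {p : ℝ × ℝ | p.1 < p.2}.indicator
        (fun p => gP k p.1 * G p.1 p.2) (s, t) := by
  have hF : Measurable (Function.uncurry fun a b => G (gT μ σ a) (gT μ σ b)) :=
    hG.comp (Measurable.prodMk (by fun_prop) (by fun_prop) :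
      Measurable fun p : ℝ × ℝ => (gT μ σ p.1, gT μ σ p.2))
  rw [lintegral_cons _ _ (gS_meas μ σ _ hF _ _), lintegral_fin_one,
    ← gT_cov μ σ hσ]
  refine lintegral_congr fun b => ?_
  rw [← gT_cov μ σ hσ, ← lintegral_const_mul']
  swap
  · exact ENNReal.ofReal_ne_top
  refine lintegral_congr fun a => ?_
  unfold gS
  by_cases ha : b < a
  · rw [Set.indicator_of_mem, Set.indicator_of_mem]
    · rw [Fin.prod_univ_two]
      simp
      ring
    · exact (gT_lt μ σ hσ _ _).2 ha
    · exact strictAnti_vecCons.2 ⟨ha, Subsingleton.strictAnti (α := Fin 1) _⟩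
  · rw [Set.indicator_of_notMem, Set.indicator_of_notMem]
    · simp
    · exact fun h => ha ((gT_lt μ σ hσ _ _).1 h)
    · exact fun h => ha (strictAnti_vecCons.1 h).1

lemma dens_eq (μ σ : ℝ) (hσ : 0 < σ) (n : ℕ) (H : ℝ → ℝ → ENNReal) (x : Fin (n + 2) → ℝ) :
    ENNReal.ofReal (gevr0Density μ σ (n + 2) x) *
      H (gT μ σ (x (Fin.last n).castSucc)) (gT μ σ (x (Fin.last (n + 1)))) =
    gS μ σ (fun a b => (fun s t => ENNReal.ofReal (Real.exp (-t)) * H s t)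
      (gT μ σ a) (gT μ σ b)) n 0 x := by
  unfold gS gevr0Density
  by_cases hx : StrictAnti x
  · rw [dif_pos ⟨by omega, hx⟩, Set.indicator_of_mem (by exact hx)]
    have hlast : (⟨n + 2 - 1, by omega⟩ : Fin (n + 2)) = Fin.last (n + 1) := by
      ext; simp
    rw [hlast]
    have h1 : (∏ j, gW μ σ (x j)) = ENNReal.ofReal (∏ j, (gT μ σ (x j) / σ)) := by
      rw [ENNReal.ofReal_prod_of_nonneg]
      · rfl
      · intro i _
        exact (div_pos (gT_pos _ _ _) hσ).le
    have h2 : (σ ^ (n + 2))⁻¹ * Real.exp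
        (-Real.exp (-((x (Fin.last (n + 1)) - μ) / σ)) - ∑ j, (x j - μ) / σ) =
        (∏ j, (gT μ σ (x j) / σ)) * Real.exp (-gT μ σ (x (Fin.last (n + 1)))) := by
      rw [Finset.prod_div_distrib]
      simp only [gT]
      rw [← Real.exp_sum, Finset.sum_neg_distrib, sub_eq_add_neg, Real.exp_add]
      simp
      ring
    rw [h2, h1, ENNReal.ofReal_mul]
    · simp [gP]
      ring
    · exact Finset.prod_nonneg fun i _ => (div_pos (gT_pos _ _ _) hσ).le
  · rw [dif_neg (fun h => hx h.2), Set.indicator_of_notMem (by exact hx)]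
    simp

lemma dens_meas (μ σ : ℝ) (hσ : 0 < σ) (n : ℕ) :
    Measurable fun x => ENNReal.ofReal (gevr0Density μ σ (n + 2) x) := by
  have : (fun x => ENNReal.ofReal (gevr0Density μ σ (n + 2) x)) =
    gS μ σ (fun a b => (fun s t => ENNReal.ofReal (Real.exp (-t)) * 1)
      (gT μ σ a) (gT μ σ b)) n 0 := by
    funext x
    rw [← dens_eq μ σ hσ n (fun _ _ => 1) x, mul_one]
  rw [this]
  refine gS_meas _ _ _ ?_ _ _
  unfold Function.uncurry
  fun_prop

lemma joint (μ σ : ℝ) (hσ : 0 < σ) (n : ℕ) (H : ℝ → ℝ → ENNReal)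
    (hH : Measurable (Function.uncurry H)) :
    ∫⁻ x, H (gT μ σ (x (Fin.last n).castSucc)) (gT μ σ (x (Fin.last (n + 1))))
      ∂(gevr0Measure μ σ (n + 2)) =
    ∫⁻ t in Set.Ioi (0 : ℝ), ∫⁻ s in Set.Ioi (0 : ℝ), {p : ℝ × ℝ | p.1 < p.2}.indicator
        (fun p => gP n p.1 * (ENNReal.ofReal (Real.exp (-p.2)) * H p.1 p.2)) (s, t) := by
  have hG : Measurable (Function.uncurry fun s t => ENNReal.ofReal (Real.exp (-t)) * H s t) := by
    refine Measurable.mul (f := fun p : ℝ × ℝ => ENNReal.ofReal (Real.exp (-p.2))) ?_ hH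
    fun_prop
  have hF : Measurable (Function.uncurry fun a b =>
      (fun s t => ENNReal.ofReal (Real.exp (-t)) * H s t) (gT μ σ a) (gT μ σ b)) :=
    hG.comp (Measurable.prodMk (by fun_prop) (by fun_prop) :
      Measurable fun p : ℝ × ℝ => (gT μ σ p.1, gT μ σ p.2))
  unfold gevr0Measure
  rw [lintegral_withDensity_eq_lintegral_mul _ (dens_meas μ σ hσ n)]
  · simp only [Pi.mul_apply]
    rw [lintegral_congr (fun x => dens_eq μ σ hσ n H x), gS_all μ σ hσ _ hF,
      gS_two μ σ hσ _ hG]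
    simp
  · exact hH.comp (Measurable.prodMk (by fun_prop) (by fun_prop))

noncomputable def gamM (k : ℕ) : Measure ℝ :=
  (volume.restrict (Set.Ioi 0)).withDensity fun t => gP k t * ENNReal.ofReal (Real.exp (-t))

lemma lintegral_gamM (k : ℕ) (H : ℝ → ENNReal) (hH : Measurable H) :
    ∫⁻ t, H t ∂(gamM k) =
      ∫⁻ t in Set.Ioi (0 : ℝ), gP k t * (ENNReal.ofReal (Real.exp (-t)) * H t) := by
  unfold gamM
  rw [lintegral_withDensity_eq_lintegral_mul _ (by fun_prop) hH]
  simp only [Pi.mul_apply, mul_assoc]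

lemma map_last (μ σ : ℝ) (hσ : 0 < σ) (n : ℕ) :
    (gevr0Measure μ σ (n + 2)).map (fun x => gT μ σ (x (Fin.last (n + 1)))) = gamM (n + 1) := by
  refine Measure.ext_of_lintegral _ fun H hH => ?_
  rw [lintegral_map hH (by fun_prop), lintegral_gamM _ _ hH,
    joint μ σ hσ n (fun _ t => H t) (hH.comp measurable_snd)]
  refine setLIntegral_congr_fun measurableSet_Ioi fun t ht => ?_
  have : ∀ s, {p : ℝ × ℝ | p.1 < p.2}.indicator
        (fun p => gP n p.1 * (ENNReal.ofReal (Real.exp (-p.2)) * H p.2)) (s, t) =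
      (Set.Iio t).indicator (gP n) s * (ENNReal.ofReal (Real.exp (-t)) * H t) := by
    intro s
    by_cases h : s < t
    · rw [Set.indicator_of_mem (by exact h), Set.indicator_of_mem (by exact h)]
    · rw [Set.indicator_of_notMem (by exact h), Set.indicator_of_notMem (by exact h), zero_mul]
  simp only [this]
  rw [lintegral_mul_const _ ((gP_meas n).indicator measurableSet_Iio), gP_step _ _ ht]

lemma map_prev (μ σ : ℝ) (hσ : 0 < σ) (n : ℕ) :
    (gevr0Measure μ σ (n + 2)).map (fun x => gT μ σ (x (Fin.last n).castSucc)) = gamM n := by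
  refine Measure.ext_of_lintegral _ fun H hH => ?_
  rw [lintegral_map hH (by fun_prop), lintegral_gamM _ _ hH,
    joint μ σ hσ n (fun s _ => H s) (hH.comp measurable_fst), lintegral_lintegral_swap]
  · refine setLIntegral_congr_fun measurableSet_Ioi fun s hs => ?_
    have : ∀ t, {p : ℝ × ℝ | p.1 < p.2}.indicator
        (fun p => gP n p.1 * (ENNReal.ofReal (Real.exp (-p.2)) * H p.1)) (s, t) =
      (Set.Ioi s).indicator (fun t => ENNReal.ofReal (Real.exp (-t))) t * (gP n s * H s) := by
      intro t
      by_cases h : s < t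
      · rw [Set.indicator_of_mem (by exact h), Set.indicator_of_mem (by exact h)]
        ring
      · rw [Set.indicator_of_notMem (by exact h), Set.indicator_of_notMem (by exact h), zero_mul]
    simp only [this]
    rw [lintegral_mul_const _ (Measurable.indicator (by fun_prop) measurableSet_Ioi),
      gE_step _ hs]
    ring
  · refine Measurable.aemeasurable ?_
    have : Measurable ({p : ℝ × ℝ | p.1 < p.2}.indicator
        (fun p => gP n p.1 * (ENNReal.ofReal (Real.exp (-p.2)) * H p.1))) := by
      refine Measurable.indicator (by fun_prop) (measurableSet_lt measurable_fst measurable_snd)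
    exact this.comp measurable_swap

lemma gamM_eq (k : ℕ) : gamM k = (volume.restrict (Set.Ioi 0)).withDensity
    fun t => ENNReal.ofReal (t ^ k * Real.exp (-t) / k.factorial) := by
  unfold gamM
  refine withDensity_congr_ae ?_
  filter_upwards [ae_restrict_mem measurableSet_Ioi] with t ht
  have : (0 : ℝ) < t := ht
  unfold gP
  rw [← ENNReal.ofReal_mul (by positivity)]
  congr 1
  ring

lemma gamM_integrable (k : ℕ) (f : ℝ → ℝ) :
    Integrable f (gamM k) ↔
      IntegrableOn (fun t => f t * (t ^ k * Real.exp (-t) / k.factorial)) (Set.Ioi 0) := by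
  rw [gamM_eq, integrable_withDensity_iff (by fun_prop) (ae_of_all _ fun _ => ENNReal.ofReal_lt_top)]
  refine integrable_congr ?_
  filter_upwards [ae_restrict_mem measurableSet_Ioi] with t ht
  have : (0 : ℝ) < t := ht
  rw [ENNReal.toReal_ofReal (by positivity)]

lemma gamM_integral (k : ℕ) (f : ℝ → ℝ) :
    ∫ t, f t ∂(gamM k) =
      ∫ t in Set.Ioi 0, f t * (t ^ k * Real.exp (-t) / k.factorial) := by
  rw [gamM_eq, integral_withDensity_eq_integral_toReal_smul (by fun_prop)
    (ae_of_all _ fun _ => ENNReal.ofReal_lt_top)]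
  refine integral_congr_ae ?_
  filter_upwards [ae_restrict_mem measurableSet_Ioi] with t ht
  have : (0 : ℝ) < t := ht
  rw [ENNReal.toReal_ofReal (by positivity), smul_eq_mul, mul_comm]

lemma pow_exp_int (k : ℕ) : IntegrableOn (fun t : ℝ => t ^ k * Real.exp (-t)) (Set.Ioi 0) := by
  have := Real.GammaIntegral_convergent (s := k + 1) (by positivity)
  refine this.congr_fun (fun t ht => ?_) measurableSet_Ioi
  simp [mul_comm]

lemma pow_exp_eq (k : ℕ) : ∫ t in Set.Ioi 0, t ^ k * Real.exp (-t) = (k.factorial : ℝ) := by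
  rw [← Real.Gamma_nat_eq_factorial, Real.Gamma_eq_integral (by positivity)]
  refine setIntegral_congr_fun measurableSet_Ioi (fun t ht => ?_)
  simp [mul_comm]

lemma gamM_prob (k : ℕ) : ∫ t, (1 : ℝ) ∂(gamM k) = 1 ∧ Integrable (fun _ => (1 : ℝ)) (gamM k) := by
  have hk : (k.factorial : ℝ) ≠ 0 := by exact_mod_cast Nat.factorial_ne_zero k
  rw [gamM_integral, gamM_integrable]
  simp only [one_mul]
  exact ⟨by rw [integral_div, pow_exp_eq, div_self hk], (pow_exp_int k).div_const _⟩

lemma gamM_mean (k : ℕ) : ∫ t, t ∂(gamM k) = k + 1 ∧ Integrable (fun t => t) (gamM k) := by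
  have hk : (k.factorial : ℝ) ≠ 0 := by exact_mod_cast Nat.factorial_ne_zero k
  rw [gamM_integral, gamM_integrable]
  have : (fun t : ℝ => t * (t ^ k * Real.exp (-t) / k.factorial)) =
    fun t => t ^ (k + 1) * Real.exp (-t) / k.factorial := by
    funext t; ring
  rw [this]
  refine ⟨?_, (pow_exp_int (k + 1)).div_const _⟩
  rw [integral_div, pow_exp_eq, Nat.factorial_succ]
  push_cast
  field_simp

lemma log_int (k : ℕ) : IntegrableOn
    (fun t : ℝ => Real.log t * (t ^ (k + 1) * Real.exp (-t))) (Set.Ioi 0) := by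
  refine Integrable.mono' ((pow_exp_int (k + 2)).add (pow_exp_int k)) ?_ ?_
  · exact Measurable.aestronglyMeasurable (by fun_prop)
  · filter_upwards [ae_restrict_mem measurableSet_Ioi] with t ht
    have h0 : (0 : ℝ) < t := ht
    have h1 := Real.log_le_sub_one_of_pos h0
    have h2 := Real.one_sub_inv_le_log_of_pos h0
    have h3 : |Real.log t| ≤ t + t⁻¹ := by
      have := inv_pos.2 h0
      rw [abs_le]; constructor <;> linarith
    rw [norm_mul, Real.norm_eq_abs, Real.norm_of_nonneg (by positivity)]
    calc _ ≤ (t + t⁻¹) * (t ^ (k + 1) * Real.exp (-t)) := by gcongr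
      _ = _ := by simp only [Pi.add_apply]; field_simp; ring

lemma deriv_Gamma_eq (k : ℕ) : deriv Real.Gamma (k + 1) =
    ∫ t in Set.Ioi 0, Real.log t * (t ^ k * Real.exp (-t)) := by
  have hre : 0 < (((k : ℝ) + 1 : ℝ) : ℂ).re := by
    rw [Complex.ofReal_re]; positivity
  have h1 := Complex.hasDerivAt_GammaIntegral hre
  have h2 : HasDerivAt Complex.Gamma _ (((k : ℝ) + 1 : ℝ) : ℂ) := h1.congr_of_eventuallyEq (by
    have : IsOpen {s : ℂ | 0 < s.re} := Complex.continuous_re.isOpen_preimage _ isOpen_Ioi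
    filter_upwards [this.mem_nhds hre] with a using Complex.Gamma_eq_integral)
  have h3 := h2.real_of_complex
  have h4 : HasDerivAt Real.Gamma _ ((k : ℝ) + 1) := h3
  rw [h4.deriv]
  have : ∫ t in Set.Ioi (0 : ℝ), (t : ℂ) ^ ((((k : ℝ) + 1 : ℝ) : ℂ) - 1) *
      ((Real.log t : ℂ) * (Real.exp (-t) : ℂ)) =
      ((∫ t in Set.Ioi (0 : ℝ), Real.log t * (t ^ k * Real.exp (-t)) : ℝ) : ℂ) := by
    rw [← integral_complex_ofReal]
    refine setIntegral_congr_fun measurableSet_Ioi fun t ht => ?_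
    simp
    ring
  rw [this, Complex.ofReal_re]

lemma gamM_log (k : ℕ) : ∫ t, Real.log t ∂(gamM (k + 1)) = digamma ((k + 2 : ℕ) : ℝ) ∧
    Integrable (fun t => Real.log t) (gamM (k + 1)) := by
  rw [gamM_integral, gamM_integrable]
  simp only [← mul_div_assoc]
  refine ⟨?_, Integrable.div_const (log_int k) _⟩
  unfold digamma
  have : ((k + 2 : ℕ) : ℝ) = ((k + 1 : ℕ) : ℝ) + 1 := by push_cast; ring
  rw [this, deriv_Gamma_eq, Real.Gamma_nat_eq_factorial, integral_div]

lemma main_aux (μ σ : ℝ) (hσ : 0 < σ) (n : ℕ) :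
    ∫ x, (-Real.log σ - gT μ σ (x (Fin.last (n + 1))) + gT μ σ (x (Fin.last n).castSucc)
      + Real.log (gT μ σ (x (Fin.last (n + 1))))) ∂(gevr0Measure μ σ (n + 2))
      = -Real.log σ - 1 + digamma ((n + 2 : ℕ) : ℝ) := by
  have mA : AEMeasurable (fun x : Fin (n + 2) → ℝ => gT μ σ (x (Fin.last (n + 1))))
    (gevr0Measure μ σ (n + 2)) := Measurable.aemeasurable (by fun_prop)
  have mB : AEMeasurable (fun x : Fin (n + 2) → ℝ => gT μ σ (x (Fin.last n).castSucc))
    (gevr0Measure μ σ (n + 2)) := Measurable.aemeasurable (by fun_prop)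
  have iA : ∀ f : ℝ → ℝ, Measurable f → Integrable f (gamM (n + 1)) →
      Integrable (fun x => f (gT μ σ (x (Fin.last (n + 1))))) (gevr0Measure μ σ (n + 2)) ∧
      ∫ x, f (gT μ σ (x (Fin.last (n + 1)))) ∂(gevr0Measure μ σ (n + 2)) =
        ∫ t, f t ∂(gamM (n + 1)) := by
    intro f hf hi
    rw [← map_last μ σ hσ n] at hi ⊢
    exact ⟨hi.comp_aemeasurable mA, (integral_map mA hf.aestronglyMeasurable).symm⟩
  have iB : ∀ f : ℝ → ℝ, Measurable f → Integrable f (gamM n) →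
      Integrable (fun x => f (gT μ σ (x (Fin.last n).castSucc))) (gevr0Measure μ σ (n + 2)) ∧
      ∫ x, f (gT μ σ (x (Fin.last n).castSucc)) ∂(gevr0Measure μ σ (n + 2)) =
        ∫ t, f t ∂(gamM n) := by
    intro f hf hi
    rw [← map_prev μ σ hσ n] at hi ⊢
    exact ⟨hi.comp_aemeasurable mB, (integral_map mB hf.aestronglyMeasurable).symm⟩
  obtain ⟨i1, e1⟩ := iA (fun _ => -Real.log σ) measurable_const (by
    simpa using (gamM_prob (n + 1)).2.const_mul (-Real.log σ))
  obtain ⟨i2, e2⟩ := iA (fun t => t) measurable_id (gamM_mean (n + 1)).2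
  obtain ⟨i3, e3⟩ := iB (fun t => t) measurable_id (gamM_mean n).2
  obtain ⟨i4, e4⟩ := iA Real.log Real.measurable_log (gamM_log n).2
  have i12 : Integrable (fun x => -Real.log σ - gT μ σ (x (Fin.last (n + 1))))
      (gevr0Measure μ σ (n + 2)) := i1.sub i2
  have i123 : Integrable (fun x => -Real.log σ - gT μ σ (x (Fin.last (n + 1)))
      + gT μ σ (x (Fin.last n).castSucc)) (gevr0Measure μ σ (n + 2)) := i12.add i3
  rw [integral_add i123 i4, integral_add i12 i3, integral_sub i1 i2,
    e1, e2, e3, e4, (gamM_mean (n + 1)).1, (gamM_mean n).1, (gamM_log n).1]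
  have : ∫ t, -Real.log σ ∂(gamM (n + 1)) = -Real.log σ := by
    have := integral_const_mul (μ := gamM (n + 1)) (-Real.log σ) (fun _ => (1 : ℝ))
    rw [(gamM_prob (n + 1)).1] at this
    simpa using this
  rw [this]
  push_cast
  ring

/-- the mean of the entropy difference
`Y = −log σ − e^{−Z_r} + e^{−Z_{r−1}} − Z_r` under the Gumbel-case GEV_r
distribution is `−log σ − 1 + ψ(r)`. -/
theorem entropy_difference_mean_gumbel
    (μ σ : ℝ) (hσ : 0 < σ) (r : ℕ) (hr : 2 ≤ r) :
    ∫ x : Fin r → ℝ,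
        (-Real.log σ
          - Real.exp (-((x ⟨r - 1, by omega⟩ - μ) / σ))
          + Real.exp (-((x ⟨r - 2, by omega⟩ - μ) / σ))
          - (x ⟨r - 1, by omega⟩ - μ) / σ)
        ∂(gevr0Measure μ σ r)
      = -Real.log σ - 1 + digamma r := by
  obtain ⟨n, rfl⟩ : ∃ n, r = n + 2 := ⟨r - 2, by omega⟩
  rw [← main_aux μ σ hσ n]
  refine integral_congr_ae (ae_of_all _ fun x => ?_)
  have h1 : (⟨n + 2 - 1, by omega⟩ : Fin (n + 2)) = Fin.last (n + 1) := by ext; simp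
  have h2 : (⟨n + 2 - 2, by omega⟩ : Fin (n + 2)) = (Fin.last n).castSucc := by ext; simp
  simp only [h1, h2, gT, Real.log_exp]
  ring
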